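/- Let N be a positive integer, let 2 < q < 3, and let f, g, h : Z/NZ → ℂ be functions such that sup_{r ∈ Z/NZ} |ĥ(r)| ≤ ε and the ℓ^q norms satisfy (∑_r |f̂(r)|^q)^{1/q} ≤ M, (∑_r |ĝ(r)|^q)^{1/q} ≤ M, (∑_r |ĥ(r)|^q)^{1/q} ≤ M, for some ε, M > 0. Then for every x ∈ Z/NZ, |∑_{y,z ∈ Z/NZ} f(y) g(z) h(x − y − z)| ≤ M^q ε^{3−q} / N. -/

import Mathlib

/-- The (unnormalized) Fourier transform on `ℤ/Nℤ`:
`f̂(r) = ∑_{x} f(x) e^{2πi r x / N}`. -/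
noncomputable def zmodFourier {N : ℕ} [NeZero N] (f : ZMod N → ℂ) (r : ZMod N) : ℂ :=
  ∑ x : ZMod N, f x * Complex.exp (2 * (Real.pi : ℂ) * Complex.I * ((r * x).val : ℂ) / (N : ℂ))

/-!
On any finite abelian group `G`, Fourier inversion shows that `|G|` times the ternary convolution
at `x` is `∑_ψ f̂(ψ) ĝ(ψ) ĥ(ψ) ψ(-x)`, the sum being over the characters `ψ` of `G`.
Writing `|ĥ| = |ĥ|^(q-2) |ĥ|^(3-q) ≤ |ĥ|^(q-2) ε^(3-q)`, what remains is bounded by Hölder's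
inequality with the three exponents `q`, `q` and `q / (q - 2)`.
-/

open MeasureTheory
open scoped NNReal ENNReal

section Holder

variable {α : Type*} [Fintype α]

theorem nnreal_sum_prod_rpow_le_prod_sum_rpow {ι : Type*} (s : Finset ι) {w : ι → ℝ}
    (hw : ∀ i ∈ s, 0 ≤ w i) (hw_sum : ∑ i ∈ s, w i = 1) (F : ι → α → ℝ≥0) :
    ∑ a, ∏ i ∈ s, F i a ^ w i ≤ ∏ i ∈ s, (∑ a, F i a) ^ w i := by
  let _ : MeasurableSpace α := ⊤
  have holder := ENNReal.lintegral_prod_norm_pow_le (μ := Measure.count) s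
    (f := fun i a ↦ (F i a : ℝ≥0∞)) (fun _ _ ↦ measurable_from_top.aemeasurable) hw_sum hw
  simp only [lintegral_count, tsum_fintype] at holder
  rw [← ENNReal.coe_le_coe]
  push_cast
  convert holder using 2 with a _ i hi
  · exact Finset.prod_congr rfl fun i hi ↦ ENNReal.coe_rpow_of_nonneg _ (hw i hi)
  · rw [ENNReal.coe_rpow_of_nonneg _ (hw i hi)]
    push_cast
    rfl

theorem sum_mul_mul_rpow_sub_two_le_Lp {q : ℝ} (hq : 2 ≤ q) {a b c : α → ℝ}
    (ha : ∀ i, 0 ≤ a i) (hb : ∀ i, 0 ≤ b i) (hc : ∀ i, 0 ≤ c i) :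
    ∑ i, a i * b i * c i ^ (q - 2) ≤
      (∑ i, a i ^ q) ^ (1 / q) * (∑ i, b i ^ q) ^ (1 / q) *
        ((∑ i, c i ^ q) ^ (1 / q)) ^ (q - 2) := by
  lift a to α → ℝ≥0 using ha
  lift b to α → ℝ≥0 using hb
  lift c to α → ℝ≥0 using hc
  have hq_pos : 0 < q := by linarith
  have weights_nonneg : ∀ i ∈ Finset.univ, 0 ≤ ![1 / q, 1 / q, 1 / q * (q - 2)] i := by
    have : 0 ≤ q - 2 := by linarith
    simp only [Finset.mem_univ, forall_const, Fin.forall_fin_succ, Matrix.cons_val_zero,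
      Matrix.cons_val_succ, IsEmpty.forall_iff, and_true]
    exact ⟨by positivity, by positivity, by positivity⟩
  have weights_sum : ∑ i, ![1 / q, 1 / q, 1 / q * (q - 2)] i = 1 := by
    simp only [Fin.sum_univ_three, Matrix.cons_val]
    field_simp
    ring
  have holder := nnreal_sum_prod_rpow_le_prod_sum_rpow Finset.univ weights_nonneg weights_sum
    ![fun i ↦ a i ^ q, fun i ↦ b i ^ q, fun i ↦ c i ^ q]
  simp only [Fin.prod_univ_three, Matrix.cons_val, NNReal.rpow_mul, one_div,
    NNReal.rpow_rpow_inv hq_pos.ne'] at holder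
  simpa only [one_div] using! mod_cast holder

theorem sum_mul_mul_le_Lp_mul_rpow {q ε : ℝ} (hq2 : 2 ≤ q) (hq3 : q ≤ 3) {a b c : α → ℝ}
    (ha : ∀ i, 0 ≤ a i) (hb : ∀ i, 0 ≤ b i) (hc : ∀ i, 0 ≤ c i) (hcε : ∀ i, c i ≤ ε) :
    ∑ i, a i * b i * c i ≤
      (∑ i, a i ^ q) ^ (1 / q) * (∑ i, b i ^ q) ^ (1 / q) *
        ((∑ i, c i ^ q) ^ (1 / q)) ^ (q - 2) * ε ^ (3 - q) := by
  obtain _ | ⟨⟨i₀⟩⟩ := isEmpty_or_nonempty α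
  · have hq_inv : q⁻¹ ≠ 0 := inv_ne_zero (two_pos.trans_le hq2).ne'
    simp [Real.zero_rpow hq_inv]
  have hε : 0 ≤ ε := (hc i₀).trans (hcε i₀)
  have c_le (i : α) : c i ≤ c i ^ (q - 2) * ε ^ (3 - q) :=
    calc c i = c i ^ (q - 2) * c i ^ (3 - q) := by
          rw [← Real.rpow_add_of_nonneg (hc i) (by linarith) (by linarith)]
          norm_num
      _ ≤ c i ^ (q - 2) * ε ^ (3 - q) := by
          have : 0 ≤ c i := hc i
          have : 0 ≤ 3 - q := by linarith
          gcongr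
          exact hcε i
  calc ∑ i, a i * b i * c i
      ≤ ∑ i, a i * b i * (c i ^ (q - 2) * ε ^ (3 - q)) :=
        Finset.sum_le_sum fun i _ ↦
          mul_le_mul_of_nonneg_left (c_le i) (mul_nonneg (ha i) (hb i))
    _ = (∑ i, a i * b i * c i ^ (q - 2)) * ε ^ (3 - q) := by
        simp only [Finset.sum_mul, mul_assoc]
    _ ≤ _ := by
        gcongr
        exact sum_mul_mul_rpow_sub_two_le_Lp hq2 ha hb hc

end Holder

section Fourier

variable {G : Type*} [AddCommGroup G] [Fintype G]

/-- The unnormalized Fourier transform of `f` on a finite abelian group, as a function on the dual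
group of complex characters. As in `zmodFourier`, the character is not conjugated. -/
noncomputable def dualFourier (f : G → ℂ) (ψ : AddChar G ℂ) : ℂ :=
  ∑ x, f x * ψ x

theorem dualFourier_conv (f g : G → ℂ) (ψ : AddChar G ℂ) :
    dualFourier (fun x ↦ ∑ y, f y * g (x - y)) ψ = dualFourier f ψ * dualFourier g ψ := by
  simp only [dualFourier, Finset.sum_mul]
  rw [Finset.sum_comm]
  refine Finset.sum_congr rfl fun y _ ↦ ?_
  rw [Finset.mul_sum]
  refine Fintype.sum_equiv (Equiv.subRight y) _ _ fun x ↦ ?_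
  have hψ : ψ x = ψ y * ψ (x - y) := by rw [← AddChar.map_add_eq_mul, add_sub_cancel]
  rw [hψ, Equiv.subRight_apply]
  ring

theorem dualFourier_ternary_conv (f g h : G → ℂ) (ψ : AddChar G ℂ) :
    dualFourier (fun x ↦ ∑ y, ∑ z, f y * g z * h (x - y - z)) ψ =
      dualFourier f ψ * dualFourier g ψ * dualFourier h ψ := by
  simp only [mul_assoc, ← Finset.mul_sum]
  rw [dualFourier_conv f fun u ↦ ∑ z, g z * h (u - z), dualFourier_conv]

theorem sum_dualFourier_mul_apply_neg (f : G → ℂ) (x : G) :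
    ∑ ψ, dualFourier f ψ * ψ (-x) = Fintype.card G * f x := by
  classical
  calc ∑ ψ, dualFourier f ψ * ψ (-x)
      = ∑ y, f y * ∑ ψ : AddChar G ℂ, ψ (y - x) := by
        simp only [dualFourier, Finset.sum_mul, Finset.mul_sum, sub_eq_add_neg,
          AddChar.map_add_eq_mul, mul_assoc]
        exact Finset.sum_comm
    _ = Fintype.card G * f x := by
        simp [AddChar.sum_apply_eq_ite, sub_eq_zero, mul_comm]

theorem card_mul_norm_le_sum_norm_dualFourier (f : G → ℂ) (x : G) :
    Fintype.card G * ‖f x‖ ≤ ∑ ψ, ‖dualFourier f ψ‖ :=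
  calc Fintype.card G * ‖f x‖ = ‖∑ ψ, dualFourier f ψ * ψ (-x)‖ := by
        rw [sum_dualFourier_mul_apply_neg, norm_mul, Complex.norm_natCast]
    _ ≤ ∑ ψ, ‖dualFourier f ψ * ψ (-x)‖ := norm_sum_le _ _
    _ = ∑ ψ, ‖dualFourier f ψ‖ := by simp only [norm_mul, AddChar.norm_apply, mul_one]

theorem card_mul_norm_ternary_conv_le (f g h : G → ℂ) (x : G) :
    Fintype.card G * ‖∑ y, ∑ z, f y * g z * h (x - y - z)‖ ≤
      ∑ ψ, ‖dualFourier f ψ‖ * ‖dualFourier g ψ‖ * ‖dualFourier h ψ‖ := by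
  simpa only [dualFourier_ternary_conv, norm_mul] using card_mul_norm_le_sum_norm_dualFourier
    (fun u ↦ ∑ y, ∑ z, f y * g z * h (u - y - z)) x

theorem stmt16_general {q ε M₁ M₂ M₃ : ℝ} (hq2 : 2 ≤ q) (hq3 : q ≤ 3) (f g h : G → ℂ)
    (hε : ∀ ψ, ‖dualFourier h ψ‖ ≤ ε)
    (hf : (∑ ψ, ‖dualFourier f ψ‖ ^ q) ^ (1 / q) ≤ M₁)
    (hg : (∑ ψ, ‖dualFourier g ψ‖ ^ q) ^ (1 / q) ≤ M₂)
    (hh : (∑ ψ, ‖dualFourier h ψ‖ ^ q) ^ (1 / q) ≤ M₃) (x : G) :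
    ‖∑ y, ∑ z, f y * g z * h (x - y - z)‖ ≤
      M₁ * M₂ * M₃ ^ (q - 2) * ε ^ (3 - q) / Fintype.card G := by
  have hε_nonneg : 0 ≤ ε := (norm_nonneg _).trans (hε 0)
  have hM₁ : 0 ≤ M₁ := le_trans (by positivity) hf
  have hM₂ : 0 ≤ M₂ := le_trans (by positivity) hg
  rw [le_div_iff₀' (by exact_mod_cast Fintype.card_pos)]
  calc Fintype.card G * ‖∑ y, ∑ z, f y * g z * h (x - y - z)‖
      ≤ ∑ ψ, ‖dualFourier f ψ‖ * ‖dualFourier g ψ‖ * ‖dualFourier h ψ‖ :=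
        card_mul_norm_ternary_conv_le f g h x
    _ ≤ (∑ ψ, ‖dualFourier f ψ‖ ^ q) ^ (1 / q) * (∑ ψ, ‖dualFourier g ψ‖ ^ q) ^ (1 / q) *
          ((∑ ψ, ‖dualFourier h ψ‖ ^ q) ^ (1 / q)) ^ (q - 2) * ε ^ (3 - q) :=
        sum_mul_mul_le_Lp_mul_rpow hq2 hq3 (fun _ ↦ norm_nonneg _) (fun _ ↦ norm_nonneg _)
          (fun _ ↦ norm_nonneg _) hε
    _ ≤ M₁ * M₂ * M₃ ^ (q - 2) * ε ^ (3 - q) := by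
        have : 0 ≤ q - 2 := by linarith
        gcongr

end Fourier

theorem zmodFourier_eq_dualFourier {N : ℕ} [NeZero N] (f : ZMod N → ℂ) (r : ZMod N) :
    zmodFourier f r = dualFourier f (AddChar.zmodAddEquiv r) := by
  refine Finset.sum_congr rfl fun x _ ↦ ?_
  have hψ : AddChar.zmodAddEquiv r x = (ZMod.toCircle (r * x) : ℂ) := rfl
  rw [hψ, ZMod.toCircle_apply]

theorem sum_norm_zmodFourier_rpow {N : ℕ} [NeZero N] (f : ZMod N → ℂ) (q : ℝ) :
    ∑ r, ‖zmodFourier f r‖ ^ q = ∑ ψ, ‖dualFourier f ψ‖ ^ q :=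
  Fintype.sum_equiv AddChar.zmodAddEquiv.toEquiv _ _ fun r ↦ by
    rw [zmodFourier_eq_dualFourier]
    rfl

/-- A ternary convolution is small when one factor is Fourier-uniform: if `‖ĥ‖_∞ ≤ ε` and
`f, g, h` all have `ℓ^q` Fourier norm at most `M` (with `2 < q < 3`), then for every `x`,
`|∑_{y,z} f(y) g(z) h(x - y - z)| ≤ M^q ε^{3-q} / N`. -/
theorem stmt16 (N : ℕ) [NeZero N] (q ε M : ℝ) (hq2 : 2 < q) (hq3 : q < 3)
    (hε : 0 < ε) (hM : 0 < M) (f g h : ZMod N → ℂ)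
    (hhinf : ∀ r : ZMod N, ‖zmodFourier h r‖ ≤ ε)
    (hfq : (∑ r : ZMod N, ‖zmodFourier f r‖ ^ q) ^ (1 / q) ≤ M)
    (hgq : (∑ r : ZMod N, ‖zmodFourier g r‖ ^ q) ^ (1 / q) ≤ M)
    (hhq : (∑ r : ZMod N, ‖zmodFourier h r‖ ^ q) ^ (1 / q) ≤ M) :
    ∀ x : ZMod N,
      ‖∑ y : ZMod N, ∑ z : ZMod N, f y * g z * h (x - y - z)‖ ≤
        M ^ q * ε ^ (3 - q) / N := by
  simp only [sum_norm_zmodFourier_rpow] at hfq hgq hhq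
  simp only [zmodFourier_eq_dualFourier] at hhinf
  have hM_pow : M ^ q = M * M * M ^ (q - 2) := by
    rw [Real.rpow_sub hM, Real.rpow_two]
    field_simp
  intro x
  simpa only [hM_pow, ZMod.card] using stmt16_general hq2.le hq3.le f g h
    (AddChar.zmodAddEquiv.surjective.forall.2 hhinf) hfq hgq hhq x
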